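/- Let x = (x₁, x₂) be a leader's decision in the box [x̲₁, x̄₁] × [x̲₂, x̄₂] and let y* ∈ S(x) be a maximizer of f(x, ·) over Ω(x). Suppose α ∈ ℝ^{n−1}, β ∈ ℝ^{n+1}, γ, δ⁻, δ⁺ ∈ ℝ, and π ∈ ℝ satisfy the KKT conditions of the lower-level problem at y*: nonnegativity α_i ≥ 0 (i = 1, …, n−1), β_i ≥ 0 (i = 1, …, n+1), γ ≥ 0, δ⁻ ≥ 0, δ⁺ ≥ 0; stationarity −1 + 2 α₁ y*₁ − β₁ − π = 0, −α_{i−1} + 2 α_i y*_i − β_i = 0 for i = 2, …, n−1, (x₁ + x₂ − y*_{n+1} − y*_{n+2}) − α_{n−1} − β_n − π = 0, −y*_n − β_{n+1} + γ = 0, and −y*_n − δ⁻ + δ⁺ = 0; and complementarity α_i (y*_{i+1} − (y*_i)²) = 0 for i = 1, …, n−1, β_i y*_i = 0 for i = 1, …, n+1, γ (x₁ − y*_{n+1}) = 0, δ⁻ (y*_{n+2} + x₂) = 0, and δ⁺ (x₂ − y*_{n+2}) = 0. Then β_i = 0 for all i = 1, …, n+1, δ⁻ = 0, γ > 0, δ⁺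 > 0, π = −α_{n−1}, and α_i > 0 for all i = 1, …, n−1. In particular, strict complementarity holds: every inequality constraint of Ω(x) that is active at y* carries a strictly positive multiplier, and every inactive constraint carries multiplier zero. -/

import Mathlib

/-!
Feasibility forces `yₙ > 0`: otherwise `y₁ = 1/2`, and `yᵢ₊₁ ≥ yᵢ²` propagates positivity up
the chain to `yₙ`. The last two stationarity equations then give `γ > 0` and `δ⁺ > 0`, so
`yₙ₊₁ = x₁` and `yₙ₊₂ = x₂`; since `x₁, x₂ > 0`, complementarity yields `βₙ₊₁ = 0` and `δ⁻ = 0`.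
The price `x₁ + x₂ - yₙ₊₁ - yₙ₊₂` vanishes, and `βₙ = 0`, whence `π = -αₙ₋₁`.

It remains to treat the chain `y₁, …, yₙ`. If `αₙ₋₁ = 0`, the first stationarity equation reads
`2 α₁ y₁ = 1 + β₁ > 0`, so `y₁ > 0` and `α₁ > 0`; all `yᵢ` are positive and `αᵢ₋₁ ≤ 2 αᵢ yᵢ`
propagates positivity of `α` upwards to `αₙ₋₁`, a contradiction. Hence `αₙ₋₁ > 0`, and one descends:
`αᵢ > 0` and `yᵢ₊₁ > 0` make the constraint `yᵢ² ≤ yᵢ₊₁` active, so `yᵢ > 0`, `βᵢ = 0` and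
`αᵢ₋₁ = 2 αᵢ yᵢ > 0`.
-/

/-- The lower-level feasible set `Ω(x)` of the bilevel example: points
`y ∈ ℝ^{n+2}` (0-indexed: Lean index `j` corresponds to math index `j+1`) with
`y₁ + yₙ = 1/2`, `yᵢ² ≤ yᵢ₊₁` for `i = 1,…,n−1`, `yᵢ ≥ 0` for `i = 1,…,n`,
`0 ≤ y_{n+1} ≤ x₁`, and `−x₂ ≤ y_{n+2} ≤ x₂`. -/
def Omega (n : ℕ) (x1 x2 : ℝ) : Set (Fin (n + 2) → ℝ) :=
  {y | y ⟨0, by omega⟩ + y ⟨n - 1, by omega⟩ = 1 / 2 ∧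
    (∀ i : ℕ, ∀ _h1 : 1 ≤ i, ∀ _h2 : i ≤ n - 1,
      (y ⟨i - 1, by omega⟩) ^ 2 ≤ y ⟨i, by omega⟩) ∧
    (∀ i : ℕ, ∀ _h1 : 1 ≤ i, ∀ _h2 : i ≤ n, 0 ≤ y ⟨i - 1, by omega⟩) ∧
    0 ≤ y ⟨n, by omega⟩ ∧ y ⟨n, by omega⟩ ≤ x1 ∧
    -x2 ≤ y ⟨n + 1, by omega⟩ ∧ y ⟨n + 1, by omega⟩ ≤ x2}

/-- The follower's objective `f(x, y) = y₁ − yₙ (x₁ + x₂ − y_{n+1} − y_{n+2})`. -/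
noncomputable def follower (n : ℕ) (x1 x2 : ℝ) (y : Fin (n + 2) → ℝ) : ℝ :=
  y ⟨0, by omega⟩ -
    y ⟨n - 1, by omega⟩ * (x1 + x2 - y ⟨n, by omega⟩ - y ⟨n + 1, by omega⟩)

/-- The set `S(x)` of maximizers of the follower's objective over `Ω(x)`. -/
def SOpt (n : ℕ) (x1 x2 : ℝ) : Set (Fin (n + 2) → ℝ) :=
  {y | y ∈ Omega n x1 x2 ∧
    ∀ y' ∈ Omega n x1 x2, follower n x1 x2 y' ≤ follower n x1 x2 y}

/-- Positivity propagates up the chain `yᵢ² ≤ yᵢ₊₁`. -/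
theorem chain_pos_up (m : ℕ) (y : ℕ → ℝ)
    (hsq : ∀ i, 1 ≤ i → i ≤ m → y i ^ 2 ≤ y (i + 1)) (h1 : 0 < y 1) :
    ∀ i, 1 ≤ i → i ≤ m + 1 → 0 < y i := by
  intro i hi
  induction i, hi using Nat.le_induction with
  | base => intro _; exact h1
  | succ k hk ih =>
    intro hkm
    have := ih (by omega)
    exact lt_of_lt_of_le (by positivity) (hsq k hk (by omega))

/-- The KKT system restricted to the chain `y₁, …, yₘ₊₁` (indices starting at `1`), with
`π` already eliminated through `π = -αₘ`. -/
theorem chain_multipliers (m : ℕ) (hm : 1 ≤ m) (y a b : ℕ → ℝ)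
    (hy : ∀ i, 1 ≤ i → i ≤ m + 1 → 0 ≤ y i)
    (hsq : ∀ i, 1 ≤ i → i ≤ m → y i ^ 2 ≤ y (i + 1))
    (ha : ∀ i, 1 ≤ i → i ≤ m → 0 ≤ a i)
    (hb : ∀ i, 1 ≤ i → i ≤ m → 0 ≤ b i)
    (hst1 : -1 + 2 * a 1 * y 1 - b 1 + a m = 0)
    (hst2 : ∀ i, 2 ≤ i → i ≤ m → -a (i - 1) + 2 * a i * y i - b i = 0)
    (hc1 : ∀ i, 1 ≤ i → i ≤ m → a i * (y (i + 1) - y i ^ 2) = 0)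
    (hc2 : ∀ i, 1 ≤ i → i ≤ m → b i * y i = 0)
    (hlast : 0 < y (m + 1)) :
    ∀ i, 1 ≤ i → i ≤ m → 0 < a i ∧ b i = 0 := by
  have ham : 0 < a m := by
    refine lt_of_le_of_ne (ha m hm le_rfl) fun h0 => ?_
    have hb1 := hb 1 le_rfl hm
    have ha1 := ha 1 le_rfl hm
    have hy1 := hy 1 le_rfl (by omega)
    have hprod : 0 < a 1 * y 1 := by nlinarith
    have hy1' : 0 < y 1 := pos_of_mul_pos_right hprod ha1
    have ha1' : 0 < a 1 := pos_of_mul_pos_left hprod hy1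
    have hup : ∀ i, 1 ≤ i → i ≤ m → 0 < a i := by
      intro i hi
      induction i, hi using Nat.le_induction with
      | base => intro _; exact ha1'
      | succ k hk ih =>
        intro hkm
        have hk0 := ih (by omega)
        have hs := hst2 (k + 1) (by omega) hkm
        rw [Nat.add_sub_cancel] at hs
        have hbk := hb (k + 1) (by omega) hkm
        have : 0 < a (k + 1) * y (k + 1) := by nlinarith
        exact pos_of_mul_pos_left this (hy (k + 1) (by omega) (by omega))
    exact (hup m hm le_rfl).ne h0
  -- One step of the descent: an active constraint below a positive coordinate.
  have step : ∀ i, 1 ≤ i → i ≤ m → 0 < a i → 0 < y (i + 1) → 0 < y i ∧ b i = 0 := by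
    intro i h1 h2 hai hyi
    have hact : y (i + 1) - y i ^ 2 = 0 := (mul_eq_zero.mp (hc1 i h1 h2)).resolve_left hai.ne'
    have hyi0 : 0 < y i := by
      refine lt_of_le_of_ne (hy i h1 (by omega)) fun h0 => ?_
      rw [← h0] at hact
      norm_num at hact
      exact hyi.ne' hact
    exact ⟨hyi0, (mul_eq_zero.mp (hc2 i h1 h2)).resolve_right hyi0.ne'⟩
  have key : ∀ d i, i + d = m → 1 ≤ i → 0 < a i ∧ 0 < y (i + 1) := by
    intro d
    induction d with
    | zero =>
      intro i hi _
      obtain rfl : i = m := by omega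
      exact ⟨ham, hlast⟩
    | succ d ih =>
      intro i hi h1
      obtain ⟨hA, hY⟩ := ih (i + 1) (by omega) (by omega)
      obtain ⟨hY', hB⟩ := step (i + 1) (by omega) (by omega) hA hY
      have hs := hst2 (i + 1) (by omega) (by omega)
      rw [Nat.add_sub_cancel, hB] at hs
      have := mul_pos hA hY'
      exact ⟨by linarith, hY'⟩
  intro i h1 h2
  obtain ⟨hA, hY⟩ := key (m - i) i (by omega) h1
  exact ⟨hA, (step i h1 h2 hA hY).2⟩

/-- Strict complementarity: if `y* ∈ S(x)` and the multipliers
`α, β, γ, δ⁻, δ⁺, π` satisfy the KKT conditions of the lower-level problem at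
`y*` (nonnegativity, stationarity, complementarity), then `βᵢ = 0` for all
`i = 1,…,n+1`, `δ⁻ = 0`, `γ > 0`, `δ⁺ > 0`, `π = −α_{n−1}`, and `αᵢ > 0` for
all `i = 1,…,n−1`; i.e. every active inequality constraint carries a strictly
positive multiplier and every inactive one carries multiplier zero. -/
theorem stmt19 (n : ℕ) (hn : 2 ≤ n)
    (xl1 xl2 xu1 xu2 : ℝ) (hl1 : 1 ≤ xl1) (hl2 : 1 ≤ xl2)
    (hu1 : xl1 < xu1) (hu2 : xl2 < xu2)
    (x1 x2 : ℝ) (hx1 : x1 ∈ Set.Icc xl1 xu1) (hx2 : x2 ∈ Set.Icc xl2 xu2)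
    (ys : Fin (n + 2) → ℝ) (hys : ys ∈ SOpt n x1 x2)
    (al be : ℕ → ℝ) (ga dm dp pii : ℝ)
    -- nonnegativity of the multipliers
    (hal : ∀ i : ℕ, ∀ _h1 : 1 ≤ i, ∀ _h2 : i ≤ n - 1, 0 ≤ al i)
    (hbe : ∀ i : ℕ, ∀ _h1 : 1 ≤ i, ∀ _h2 : i ≤ n + 1, 0 ≤ be i)
    (hga : 0 ≤ ga) (hdm : 0 ≤ dm) (hdp : 0 ≤ dp)
    -- stationarity
    (hst1 : -1 + 2 * al 1 * ys ⟨0, by omega⟩ - be 1 - pii = 0)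
    (hst2 : ∀ i : ℕ, ∀ _h1 : 2 ≤ i, ∀ _h2 : i ≤ n - 1,
      -al (i - 1) + 2 * al i * ys ⟨i - 1, by omega⟩ - be i = 0)
    (hst3 : (x1 + x2 - ys ⟨n, by omega⟩ - ys ⟨n + 1, by omega⟩) -
      al (n - 1) - be n - pii = 0)
    (hst4 : -ys ⟨n - 1, by omega⟩ - be (n + 1) + ga = 0)
    (hst5 : -ys ⟨n - 1, by omega⟩ - dm + dp = 0)
    -- complementarity
    (hc1 : ∀ i : ℕ, ∀ _h1 : 1 ≤ i, ∀ _h2 : i ≤ n - 1,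
      al i * (ys ⟨i, by omega⟩ - (ys ⟨i - 1, by omega⟩) ^ 2) = 0)
    (hc2 : ∀ i : ℕ, ∀ _h1 : 1 ≤ i, ∀ _h2 : i ≤ n + 1,
      be i * ys ⟨i - 1, by omega⟩ = 0)
    (hc3 : ga * (x1 - ys ⟨n, by omega⟩) = 0)
    (hc4 : dm * (ys ⟨n + 1, by omega⟩ + x2) = 0)
    (hc5 : dp * (x2 - ys ⟨n + 1, by omega⟩) = 0) :
    (∀ i : ℕ, ∀ _h1 : 1 ≤ i, ∀ _h2 : i ≤ n + 1, be i = 0) ∧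
    dm = 0 ∧ 0 < ga ∧ 0 < dp ∧ pii = -al (n - 1) ∧
    (∀ i : ℕ, ∀ _h1 : 1 ≤ i, ∀ _h2 : i ≤ n - 1, 0 < al i) := by
  obtain ⟨⟨hsum, hsq, hnn, -, -, -, -⟩, -⟩ := hys
  have hx1' : 0 < x1 := by linarith [hx1.1]
  have hx2' : 0 < x2 := by linarith [hx2.1]
  obtain ⟨m, rfl⟩ : ∃ m, n = m + 1 := ⟨n - 1, by omega⟩
  simp only [Nat.add_sub_cancel] at *
  -- The coordinates as a 1-indexed sequence; values beyond the range are irrelevant.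
  obtain ⟨y, hy⟩ : ∃ y : ℕ → ℝ, ∀ (i : ℕ) (h : i < m + 1 + 2), ys ⟨i, h⟩ = y (i + 1) :=
    ⟨fun i => if h : i - 1 < m + 1 + 2 then ys ⟨i - 1, h⟩ else 0, fun i h => by simp [h]⟩
  have hidx : ∀ (i : ℕ) (h : i - 1 < m + 1 + 2), 1 ≤ i → ys ⟨i - 1, h⟩ = y i := by
    intro i h h1
    rw [hy, Nat.sub_add_cancel h1]
  have hsq' : ∀ i, 1 ≤ i → i ≤ m → y i ^ 2 ≤ y (i + 1) := by
    intro i h1 h2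
    have := hsq i h1 h2
    rwa [hidx _ _ h1, hy] at this
  have hnn' : ∀ i, 1 ≤ i → i ≤ m + 1 → 0 ≤ y i := by
    intro i h1 h2
    have := hnn i h1 h2
    rwa [hidx _ _ h1] at this
  have hc1' : ∀ i, 1 ≤ i → i ≤ m → al i * (y (i + 1) - y i ^ 2) = 0 := by
    intro i h1 h2
    have := hc1 i h1 h2
    rwa [hidx _ _ h1, hy] at this
  have hc2' : ∀ i, 1 ≤ i → i ≤ m + 1 + 1 → be i * y i = 0 := by
    intro i h1 h2
    have := hc2 i h1 h2
    rwa [hidx _ _ h1] at this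
  have hst2' : ∀ i, 2 ≤ i → i ≤ m → -al (i - 1) + 2 * al i * y i - be i = 0 := by
    intro i h1 h2
    have := hst2 i h1 h2
    rwa [hidx _ _ (by omega)] at this
  rw [hy, hy] at hsum
  rw [hy] at hst1 hst4 hst5 hc3 hc4 hc5
  rw [hy, hy] at hst3
  rw [zero_add] at hst1 hsum
  have hlast : 0 < y (m + 1) := by
    refine lt_of_le_of_ne (hnn' (m + 1) (by omega) le_rfl) fun h0 => ?_
    exact (chain_pos_up m y hsq' (by linarith) (m + 1) (by omega) le_rfl).ne h0
  have hga' : 0 < ga := by linarith [hbe (m + 1 + 1) (by omega) le_rfl]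
  have hdp' : 0 < dp := by linarith
  have e1 : x1 - y (m + 1 + 1) = 0 := (mul_eq_zero.mp hc3).resolve_left hga'.ne'
  have e2 : x2 - y (m + 1 + 1 + 1) = 0 := (mul_eq_zero.mp hc5).resolve_left hdp'.ne'
  have hbl : be (m + 1 + 1) = 0 :=
    (mul_eq_zero.mp (hc2' (m + 1 + 1) (by omega) le_rfl)).resolve_right
      (show (0:ℝ) < y (m + 1 + 1) by linarith).ne'
  have hdm0 : dm = 0 :=
    (mul_eq_zero.mp hc4).resolve_right
      (show (0:ℝ) < y (m + 1 + 1 + 1) + x2 by linarith).ne'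
  have hbn : be (m + 1) = 0 :=
    (mul_eq_zero.mp (hc2' (m + 1) (by omega) (by omega))).resolve_right hlast.ne'
  have hpi : pii = -al m := by linarith
  have hchain := chain_multipliers m (by omega) y al be hnn' hsq' hal
    (fun i h1 h2 => hbe i h1 (by omega)) (by linarith) hst2' hc1'
    (fun i h1 h2 => hc2' i h1 (by omega)) hlast
  refine ⟨fun i h1 h2 => ?_, hdm0, hga', hdp', hpi, fun i h1 h2 => (hchain i h1 h2).1⟩
  rcases Nat.lt_or_ge m i with h | h
  · obtain rfl | rfl : i = m + 1 ∨ i = m + 1 + 1 := by omega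
    · exact hbn
    · exact hbl
  · exact (hchain i h1 h).2
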